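/- Let ε ∈ (0, 1/2) and η ≥ 1 with η·ε < 1/2, let n ≥ 1, and let A, Â ∈ ℝ^n and q, q̂ ∈ ℝ^n with q_i > 0 and q̂_i > 0 for all i. Suppose max_i |Â_i − A_i| ≤ ε and |q̂_i − q_i| ≤ ε·q_i for all i. Define B_i = exp(η A_i)/Z with Z = Σ_j exp(η A_j)·q_j, and B̂_i = exp(η Â_i)/Ẑ with Ẑ = Σ_j exp(η Â_j)·q̂_j. Then |B̂_i − B_i| ≤ 111·η·ε·B_i for every i. -/

import Mathlib

/-!
Put `t = η ε < 1 / 2` and `s = 1 - t > 0`. Since `1 - t ≤ exp (-t)`, the numbers `exp (η Av i)` and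
`exp (η Av' i)` agree up to a factor `s` in either direction; since `ε ≤ t`, so do `q i` and
`q' i`. Hence the two normalizing sums agree up to `s ^ 2`, and the softmax entries up to `s ^ 3`
(`softmax_compare`). The claim follows from `s ^ 3 ≥ 1 - 3 t` and `(1 + 111 t) s ^ 3 ≥ 1`, valid
for `0 ≤ t ≤ 1 / 2`.
-/

/-- One-sided exponential comparison, applied below with `t = η ε`. -/
lemma one_sub_mul_exp_le {t x y : ℝ} (h : x - y ≤ t) :
    (1 - t) * Real.exp x ≤ Real.exp y := by
  calc (1 - t) * Real.exp x ≤ Real.exp (-t) * Real.exp x := by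
        gcongr
        exact Real.one_sub_le_exp_neg t
    _ = Real.exp (-t + x) := (Real.exp_add _ _).symm
    _ ≤ Real.exp y := Real.exp_le_exp.mpr (by linarith)

/-- If unnormalized scores `a, b` and weights `p, r` agree up to a factor `s`, the normalized
scores agree up to `s ^ 3`: one factor comes from the numerator, two from the denominator. -/
lemma softmax_compare {n : ℕ} {s : ℝ} (hs : 0 ≤ s) {a b p r : Fin n → ℝ}
    (ha : ∀ i, 0 < a i) (hb : ∀ i, 0 < b i) (hp : ∀ i, 0 < p i) (hr : ∀ i, 0 < r i)
    (hab : ∀ i, s * a i ≤ b i) (hba : ∀ i, s * b i ≤ a i) (hrp : ∀ i, s * r i ≤ p i) (i : Fin n) :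
    s ^ 3 * (a i / ∑ j, a j * p j) ≤ b i / ∑ j, b j * r j := by
  have hZ : 0 < ∑ j, a j * p j :=
    Finset.sum_pos (fun j _ => mul_pos (ha j) (hp j)) ⟨i, Finset.mem_univ i⟩
  have hW : 0 < ∑ j, b j * r j :=
    Finset.sum_pos (fun j _ => mul_pos (hb j) (hr j)) ⟨i, Finset.mem_univ i⟩
  have hWZ : s ^ 2 * ∑ j, b j * r j ≤ ∑ j, a j * p j := by
    rw [Finset.mul_sum]
    refine Finset.sum_le_sum fun j _ => ?_
    calc s ^ 2 * (b j * r j) = (s * b j) * (s * r j) := by ring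
      _ ≤ a j * p j :=
        mul_le_mul (hba j) (hrp j) (mul_nonneg hs (hr j).le) (ha j).le
  rw [← mul_div_assoc, div_le_div_iff₀ hZ hW]
  calc s ^ 3 * a i * ∑ j, b j * r j = (s * a i) * (s ^ 2 * ∑ j, b j * r j) := by ring
    _ ≤ b i * ∑ j, a j * p j :=
      mul_le_mul (hab i) hWZ (mul_nonneg (sq_nonneg s) hW.le) (hb i).le

/-- stability of temperature-`η` weighted softmax vectors: entrywise
perturbations of size `ε` in the scores and relative size `ε` in the weights change each
softmax entry by a relative factor of at most `111ηε`. -/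
theorem stmt_11 (n : ℕ) (hn : 1 ≤ n) (ε η : ℝ) (hε0 : 0 < ε) (hε : ε < 1 / 2)
    (hη : 1 ≤ η) (hηε : η * ε < 1 / 2)
    (Av Av' q q' : Fin n → ℝ)
    (hq : ∀ i, 0 < q i) (hq' : ∀ i, 0 < q' i)
    (hA : ∀ i, |Av' i - Av i| ≤ ε)
    (hqq : ∀ i, |q' i - q i| ≤ ε * q i) :
    ∀ i, |Real.exp (η * Av' i) / (∑ j, Real.exp (η * Av' j) * q' j)
        - Real.exp (η * Av i) / (∑ j, Real.exp (η * Av j) * q j)|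
      ≤ 111 * η * ε * (Real.exp (η * Av i) / (∑ j, Real.exp (η * Av j) * q j)) := by
  intro i
  have ht0 : 0 < η * ε := by positivity
  have hεt : ε ≤ η * ε := le_mul_of_one_le_left hε0.le hη
  have hd : ∀ j, η * Av j - η * Av' j ≤ η * ε ∧ η * Av' j - η * Av j ≤ η * ε := by
    intro j
    obtain ⟨h1, h2⟩ := abs_le.mp (hA j)
    constructor <;> nlinarith
  have hqs : ∀ j, (1 - η * ε) * q j ≤ q' j := by
    intro j
    nlinarith [(abs_le.mp (hqq j)).1, hq j]
  have hqs' : ∀ j, (1 - η * ε) * q' j ≤ q j := by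
    intro j
    have h1 : q' j ≤ (1 + η * ε) * q j := by
      nlinarith [(abs_le.mp (hqq j)).2, hq j]
    calc (1 - η * ε) * q' j ≤ (1 - η * ε) * ((1 + η * ε) * q j) :=
          mul_le_mul_of_nonneg_left h1 (by linarith)
      _ = q j - (η * ε) ^ 2 * q j := by ring
      _ ≤ q j := sub_le_self _ (mul_nonneg (sq_nonneg _) (hq j).le)
  have hs : 0 ≤ 1 - η * ε := by linarith
  have hlow := softmax_compare hs (fun j => Real.exp_pos (η * Av j))
    (fun j => Real.exp_pos (η * Av' j)) hq hq'
    (fun j => one_sub_mul_exp_le (hd j).1) (fun j => one_sub_mul_exp_le (hd j).2) hqs' i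
  have hup := softmax_compare hs (fun j => Real.exp_pos (η * Av' j))
    (fun j => Real.exp_pos (η * Av j)) hq' hq
    (fun j => one_sub_mul_exp_le (hd j).2) (fun j => one_sub_mul_exp_le (hd j).1) hqs i
  have hB : 0 ≤ Real.exp (η * Av i) / (∑ j, Real.exp (η * Av j) * q j) :=
    div_nonneg (Real.exp_pos _).le
      (Finset.sum_nonneg fun j _ => mul_nonneg (Real.exp_pos _).le (hq j).le)
  have hB' : 0 ≤ Real.exp (η * Av' i) / (∑ j, Real.exp (η * Av' j) * q' j) :=
    div_nonneg (Real.exp_pos _).le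
      (Finset.sum_nonneg fun j _ => mul_nonneg (Real.exp_pos _).le (hq' j).le)
  rw [mul_assoc 111 η ε]
  generalize Real.exp (η * Av i) / (∑ j, Real.exp (η * Av j) * q j) = B at *
  generalize Real.exp (η * Av' i) / (∑ j, Real.exp (η * Av' j) * q' j) = B' at *
  generalize η * ε = t at *
  have hs3 : 1 - 3 * t ≤ (1 - t) ^ 3 := by
    nlinarith [mul_nonneg (sq_nonneg t) (by linarith : (0 : ℝ) ≤ 3 - t)]
  have h8 : (1 / 8 : ℝ) ≤ (1 - t) ^ 3 := by
    calc (1 / 8 : ℝ) = (1 / 2) ^ 3 := by norm_num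
      _ ≤ (1 - t) ^ 3 := pow_le_pow_left₀ (by norm_num) (by linarith) 3
  have hs3' : 1 ≤ (1 + 111 * t) * (1 - t) ^ 3 := by
    nlinarith [mul_le_mul_of_nonneg_left h8 ht0.le]
  have hup' : B' ≤ (1 + 111 * t) * B := by
    calc B' ≤ ((1 + 111 * t) * (1 - t) ^ 3) * B' := le_mul_of_one_le_left hB' hs3'
      _ = (1 + 111 * t) * ((1 - t) ^ 3 * B') := by ring
      _ ≤ (1 + 111 * t) * B := mul_le_mul_of_nonneg_left hup (by linarith)
  have hlow' : (1 - 3 * t) * B ≤ B' := (mul_le_mul_of_nonneg_right hs3 hB).trans hlow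
  rw [abs_le]
  constructor <;> nlinarith [mul_nonneg ht0.le hB]
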